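/- (Komatsu–Pollak-type bound) For every α > 0, 2·e^{α²/2}·N(−α) ≤ √(α²/(2π) + 1) − α/√(2π). -/

import Mathlib

open Real Filter Set

noncomputable def stdNormalCDF (x : ℝ) : ℝ :=
  (Real.sqrt (2 * Real.pi))⁻¹ * ∫ t in Set.Iic x, Real.exp (-t ^ 2 / 2)

noncomputable def chi (α x : ℝ) : ℝ :=
  stdNormalCDF (α / 2 * (x - 1 / x)) -
    Real.exp (α ^ 2 / 2) * stdNormalCDF (-(α / 2) * (x + 1 / x))

/-!
Write `φ` for the standard normal density and `g` for the proposed bound on the Mills ratio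
`N (-x) / φ x`. The gap `φ * g - N (-·)` vanishes at `0`, and it is at least `-N (-·)`, which tends
to `0` at `∞`. Rationalizing the square root in its derivative leaves a positive factor times a
polynomial in `x ^ 2` whose nonconstant coefficients are nonpositive. The gap thus increases and
then decreases, so it stays nonnegative.
-/

open MeasureTheory ProbabilityTheory Topology

lemma hasDerivAt_integral_Iic {E : Type*} [NormedAddCommGroup E] [NormedSpace ℝ E]
    [CompleteSpace E] {f : ℝ → E} {x : ℝ} (hint : Integrable f) (hcont : ContinuousAt f x) :
    HasDerivAt (fun y ↦ ∫ t in Iic y, f t) (f x) x := by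
  have hsplit : (fun y ↦ ∫ t in Iic y, f t) = fun y ↦ (∫ t in Iic 0, f t) + ∫ t in 0..y, f t := by
    ext y
    rw [← intervalIntegral.integral_Iic_sub_Iic hint.integrableOn hint.integrableOn,
      add_sub_cancel]
  rw [hsplit]
  exact (intervalIntegral.integral_hasDerivAt_right hint.intervalIntegrable
    hint.aestronglyMeasurable.stronglyMeasurableAtFilter hcont).const_add _

lemma le_of_hasDerivAt_mul_antitoneOn {f p q u : ℝ → ℝ} {b l x : ℝ}
    (hf : ∀ y ∈ Ici b, HasDerivAt f (q y * p y) y) (hq : ∀ y ∈ Ici b, 0 ≤ q y)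
    (hp : AntitoneOn p (Ici b)) (hb : l ≤ f b) (hu : Tendsto u atTop (𝓝 l))
    (huf : u ≤ᶠ[atTop] f) (hx : b ≤ x) : l ≤ f x := by
  have hcont : ContinuousOn f (Ici b) := fun y hy ↦ (hf y hy).continuousAt.continuousWithinAt
  rcases le_total 0 (p x) with hpx | hpx
  · have hmono : MonotoneOn f (Icc b x) := by
      refine monotoneOn_of_hasDerivWithinAt_nonneg (convex_Icc b x)
        (hcont.mono Icc_subset_Ici_self)
        (fun y hy ↦ (hf y (interior_subset hy).1).hasDerivWithinAt) fun y hy ↦ ?_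
      obtain ⟨hby, hyx⟩ := interior_subset hy
      exact mul_nonneg (hq y hby) (hpx.trans (hp hby hx hyx))
    exact hb.trans (hmono ⟨le_rfl, hx⟩ ⟨hx, le_rfl⟩ hx)
  · have hanti : AntitoneOn f (Ici x) := by
      refine antitoneOn_of_hasDerivWithinAt_nonpos (convex_Ici x)
        (hcont.mono (Ici_subset_Ici.2 hx))
        (fun y hy ↦ (hf y (hx.trans (interior_subset hy))).hasDerivWithinAt) fun y hy ↦ ?_
      have hxy : x ≤ y := interior_subset hy
      exact mul_nonpos_of_nonneg_of_nonpos (hq y (hx.trans hxy))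
        ((hp hx (hx.trans hxy) hxy).trans hpx)
    refine le_of_tendsto hu ?_
    filter_upwards [huf, eventually_ge_atTop x] with y huy hxy
    exact huy.trans (hanti self_mem_Ici hxy hxy)

section StandardNormal

lemma hasDerivAt_gaussianPDFReal (μ : ℝ) (v : NNReal) (x : ℝ) :
    HasDerivAt (gaussianPDFReal μ v) (gaussianPDFReal μ v x * (-(x - μ) / v)) x := by
  have hexponent : HasDerivAt (fun y ↦ -(y - μ) ^ 2 / (2 * (v : ℝ))) (-(x - μ) / v) x := by
    refine (((((hasDerivAt_id x).sub_const μ).pow 2).neg).div_const (2 * (v : ℝ))).congr_deriv ?_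
    rw [← mul_div_mul_left (-(x - μ)) (v : ℝ) two_ne_zero]
    simp only [id_eq, Nat.cast_ofNat, Nat.add_one_sub_one, pow_one, mul_one, mul_neg]
  rw [gaussianPDFReal_def]
  exact (hexponent.exp.const_mul _).congr_deriv (by ring)

lemma gaussianPDFReal_zero_one (x : ℝ) :
    gaussianPDFReal 0 1 x = (√(2 * π))⁻¹ * rexp (-x ^ 2 / 2) := by
  simp [gaussianPDFReal]

lemma gaussianPDFReal_zero_neg (v : NNReal) (x : ℝ) :
    gaussianPDFReal 0 v (-x) = gaussianPDFReal 0 v x := by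
  simp [gaussianPDFReal]

lemma stdNormalCDF_eq_integral (x : ℝ) :
    stdNormalCDF x = ∫ t in Iic x, gaussianPDFReal 0 1 t := by
  simp_rw [stdNormalCDF, gaussianPDFReal_zero_one, integral_const_mul]

lemma hasDerivAt_stdNormalCDF (x : ℝ) : HasDerivAt stdNormalCDF (gaussianPDFReal 0 1 x) x := by
  rw [funext stdNormalCDF_eq_integral]
  exact hasDerivAt_integral_Iic (integrable_gaussianPDFReal 0 1)
    (hasDerivAt_gaussianPDFReal 0 1 x).continuousAt

lemma tendsto_stdNormalCDF_atBot : Tendsto stdNormalCDF atBot (𝓝 0) := by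
  rw [funext stdNormalCDF_eq_integral]
  exact tendsto_integral_Iic_zero tendsto_id

lemma stdNormalCDF_add_neg (x : ℝ) : stdNormalCDF x + stdNormalCDF (-x) = 1 := by
  have hint := integrable_gaussianPDFReal 0 1
  have hneg : stdNormalCDF (-x) = ∫ t in Ioi x, gaussianPDFReal 0 1 t := by
    rw [stdNormalCDF_eq_integral, ← neg_neg x, ← integral_comp_neg_Iic, neg_neg]
    simp_rw [gaussianPDFReal_zero_neg]
  rw [hneg, stdNormalCDF_eq_integral,
    intervalIntegral.integral_Iic_add_Ioi hint.integrableOn hint.integrableOn,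
    integral_gaussianPDFReal_eq_one 0 one_ne_zero]

lemma stdNormalCDF_zero : stdNormalCDF 0 = 1 / 2 := by
  have h := stdNormalCDF_add_neg 0
  rw [neg_zero] at h
  linarith

lemma hasDerivAt_gaussianPDFReal_mul_sub_stdNormalCDF_neg {g : ℝ → ℝ} {g' x : ℝ}
    (hg : HasDerivAt g g' x) :
    HasDerivAt (fun y ↦ gaussianPDFReal 0 1 y * g y - stdNormalCDF (-y))
      (gaussianPDFReal 0 1 x * (g' - x * g x + 1)) x := by
  have hcdf : HasDerivAt (fun y ↦ stdNormalCDF (-y)) (-gaussianPDFReal 0 1 x) x := by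
    rw [← gaussianPDFReal_zero_neg]
    exact ((hasDerivAt_stdNormalCDF (-x)).comp x (hasDerivAt_neg x)).congr_deriv (mul_neg_one _)
  refine (((hasDerivAt_gaussianPDFReal 0 1 x).mul hg).sub hcdf).congr_deriv ?_
  simp only [sub_zero, NNReal.coe_one, div_one]
  ring

end StandardNormal

/-- The bound `(√(x² + 2πa²) - x) / (2a)` on the Mills ratio `N (-x) / φ x`. It is sharp at `x = 0`
for every `a > 0`; `a = 2 / π` gives Pollak's inequality, and `a = 1` gives `komatsu_pollak`. -/
noncomputable def millsBound (a x : ℝ) : ℝ :=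
  (√(x ^ 2 + 2 * π * a ^ 2) - x) / (2 * a)

/-- The polynomial with the sign of the derivative of `φ x * millsBound a x - N (-x)` for `x ≥ 0`.
That derivative has numerator `√(x² + 2πa²) (x² + 2a - 1) - x (x² + 2πa² - 1)`, and the polynomial
is the difference of the squares of its two terms. -/
noncomputable def millsPoly (a x : ℝ) : ℝ :=
  (x ^ 2 + 2 * π * a ^ 2) * (x ^ 2 + 2 * a - 1) ^ 2 - x ^ 2 * (x ^ 2 + 2 * π * a ^ 2 - 1) ^ 2

/-- The conjugate by which the numerator described at `millsPoly` is rationalized. -/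
noncomputable def millsConj (a x : ℝ) : ℝ :=
  √(x ^ 2 + 2 * π * a ^ 2) * (x ^ 2 + 2 * a - 1) + x * (x ^ 2 + 2 * π * a ^ 2 - 1)

section MillsBound

variable {a x : ℝ}

lemma millsBound_nonneg (ha : 0 ≤ a) (x : ℝ) : 0 ≤ millsBound a x := by
  have hx : x ≤ √(x ^ 2 + 2 * π * a ^ 2) :=
    le_sqrt_of_sq_le (le_add_of_nonneg_right (by positivity))
  exact div_nonneg (sub_nonneg.2 hx) (by positivity)

lemma gaussianPDFReal_mul_millsBound_zero (ha : 0 < a) :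
    gaussianPDFReal 0 1 0 * millsBound a 0 = 1 / 2 := by
  have hsqrt : √(2 * π * a ^ 2) = √(2 * π) * a := by
    rw [sqrt_mul (by positivity), sqrt_sq ha.le]
  simp only [gaussianPDFReal_zero_one, millsBound, ne_eq, OfNat.ofNat_ne_zero, not_false_eq_true,
    zero_pow, neg_zero, zero_div, exp_zero, zero_add, sub_zero, hsqrt]
  field_simp

lemma hasDerivAt_millsBound (ha : a ≠ 0) (x : ℝ) :
    HasDerivAt (millsBound a) ((x / √(x ^ 2 + 2 * π * a ^ 2) - 1) / (2 * a)) x := by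
  have hradicand : HasDerivAt (fun y ↦ y ^ 2 + 2 * π * a ^ 2) (2 * x) x := by
    simpa using (hasDerivAt_pow 2 x).add_const (2 * π * a ^ 2)
  refine (((hradicand.sqrt (by positivity)).sub (hasDerivAt_id x)).div_const (2 * a)).congr_deriv ?_
  rw [mul_div_mul_left _ _ two_ne_zero]

lemma pos_of_two_div_pi_le (ha : 2 / π ≤ a) : 0 < a :=
  (div_pos two_pos pi_pos).trans_le ha

lemma antitoneOn_millsPoly (ha : 2 / π ≤ a) : AntitoneOn (millsPoly a) (Ici 0) := by
  intro x hx y _ hxy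
  have ha₀ : 0 < a := pos_of_two_div_pi_le ha
  have hπa : 2 ≤ π * a := (div_le_iff₀' pi_pos).1 ha
  have hexpand (z : ℝ) : millsPoly a z = 2 * a * (2 - π * a) * (z ^ 2) ^ 2 +
      4 * a * (a - 1 - a * (π * a) * (π * a - 2)) * z ^ 2 + 2 * π * a ^ 2 * (2 * a - 1) ^ 2 := by
    rw [millsPoly]
    ring
  have hquad : 2 * a * (2 - π * a) ≤ 0 :=
    mul_nonpos_of_nonneg_of_nonpos (by positivity) (sub_nonpos.2 hπa)
  have hlin : a - 1 - a * (π * a) * (π * a - 2) ≤ 0 := by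
    rcases le_total a 1 with ha₁ | ha₁
    · have : 0 ≤ a * (π * a) * (π * a - 2) := mul_nonneg (by positivity) (sub_nonneg.2 hπa)
      linarith
    · have h3 : 3 ≤ π * a := by nlinarith [pi_gt_three]
      have : 1 ≤ (π * a) * (π * a - 2) := by nlinarith
      nlinarith
  have hsq : x ^ 2 ≤ y ^ 2 := pow_le_pow_left₀ hx hxy 2
  have hquart : (x ^ 2) ^ 2 ≤ (y ^ 2) ^ 2 := pow_le_pow_left₀ (sq_nonneg x) hsq 2
  rw [hexpand, hexpand]
  gcongr ?_ + ?_ + _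
  · exact mul_le_mul_of_nonpos_left hquart hquad
  · exact mul_le_mul_of_nonpos_left hsq (mul_nonpos_of_nonneg_of_nonpos (by positivity) hlin)

lemma millsConj_pos (ha : 2 / π ≤ a) (hx : 0 ≤ x) : 0 < millsConj a x := by
  have ha₀ : 0 < a := pos_of_two_div_pi_le ha
  have hπa : 2 ≤ π * a := (div_le_iff₀' pi_pos).1 ha
  have ha_half : 1 < 2 * a := by nlinarith [pi_lt_four]
  have hleft : 0 < x ^ 2 + 2 * a - 1 := by nlinarith
  have hright : 0 ≤ x ^ 2 + 2 * π * a ^ 2 - 1 := by nlinarith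
  exact add_pos_of_pos_of_nonneg (mul_pos (sqrt_pos.2 (by positivity)) hleft) (mul_nonneg hx hright)

lemma deriv_millsBound_sub_mul_add_one (ha : a ≠ 0) (hconj : millsConj a x ≠ 0) :
    (x / √(x ^ 2 + 2 * π * a ^ 2) - 1) / (2 * a) - x * millsBound a x + 1 =
      (2 * a * √(x ^ 2 + 2 * π * a ^ 2) * millsConj a x)⁻¹ * millsPoly a x := by
  have hs : √(x ^ 2 + 2 * π * a ^ 2) ≠ 0 := (sqrt_pos.2 (by positivity)).ne'
  have hsq : √(x ^ 2 + 2 * π * a ^ 2) ^ 2 = x ^ 2 + 2 * π * a ^ 2 := sq_sqrt (by positivity)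
  rw [eq_inv_mul_iff_mul_eq₀ (by positivity), millsBound]
  unfold millsConj millsPoly
  set s := √(x ^ 2 + 2 * π * a ^ 2)
  rw [← hsq]
  field_simp
  ring

lemma stdNormalCDF_neg_le (ha : 2 / π ≤ a) (hx : 0 ≤ x) :
    stdNormalCDF (-x) ≤ gaussianPDFReal 0 1 x * millsBound a x := by
  have ha₀ : 0 < a := pos_of_two_div_pi_le ha
  let gap (y : ℝ) := gaussianPDFReal 0 1 y * millsBound a y - stdNormalCDF (-y)
  let weight (y : ℝ) :=
    gaussianPDFReal 0 1 y * (2 * a * √(y ^ 2 + 2 * π * a ^ 2) * millsConj a y)⁻¹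
  have hderiv (y : ℝ) (hy : 0 ≤ y) : HasDerivAt gap (weight y * millsPoly a y) y := by
    refine (hasDerivAt_gaussianPDFReal_mul_sub_stdNormalCDF_neg
      (hasDerivAt_millsBound ha₀.ne' y)).congr_deriv ?_
    rw [deriv_millsBound_sub_mul_add_one ha₀.ne' (millsConj_pos ha hy).ne', ← mul_assoc]
  have hweight (y : ℝ) (hy : 0 ≤ y) : 0 ≤ weight y := by
    have := millsConj_pos ha hy
    have := gaussianPDFReal_nonneg 0 1 y
    positivity
  have hgap_zero : gap 0 = 0 := by
    simp only [gap, gaussianPDFReal_mul_millsBound_zero ha₀, neg_zero, stdNormalCDF_zero, sub_self]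
  have htail : Tendsto (fun y ↦ -stdNormalCDF (-y)) atTop (𝓝 0) := by
    simpa only [neg_zero, Function.comp_def] using
      (tendsto_stdNormalCDF_atBot.comp tendsto_neg_atTop_atBot).neg
  have hle_gap (y : ℝ) : -stdNormalCDF (-y) ≤ gap y := by
    rw [neg_eq_zero_sub]
    exact sub_le_sub_right
      (mul_nonneg (gaussianPDFReal_nonneg 0 1 y) (millsBound_nonneg ha₀.le y)) _
  have hgap : 0 ≤ gap x := le_of_hasDerivAt_mul_antitoneOn hderiv hweight
    (antitoneOn_millsPoly ha) hgap_zero.ge htail (.of_forall hle_gap) hx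
  exact sub_nonneg.1 hgap

lemma two_mul_exp_mul_gaussianPDFReal_mul_millsBound (a x : ℝ) :
    2 * rexp (x ^ 2 / 2) * (gaussianPDFReal 0 1 x * millsBound a x) =
      (√(x ^ 2 / (2 * π) + a ^ 2) - x / √(2 * π)) / a := by
  have hexp : rexp (x ^ 2 / 2) * rexp (-x ^ 2 / 2) = 1 := by
    rw [← exp_add, neg_div, add_neg_cancel, exp_zero]
  have hsqrt : √(x ^ 2 / (2 * π) + a ^ 2) = √(x ^ 2 + 2 * π * a ^ 2) / √(2 * π) := by
    rw [← sqrt_div (by positivity)]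
    congr 1
    field_simp
  calc 2 * rexp (x ^ 2 / 2) * (gaussianPDFReal 0 1 x * millsBound a x)
      = rexp (x ^ 2 / 2) * rexp (-x ^ 2 / 2) *
          ((√(x ^ 2 + 2 * π * a ^ 2) / √(2 * π) - x / √(2 * π)) / a) := by
        rw [gaussianPDFReal_zero_one, millsBound]
        field_simp
    _ = (√(x ^ 2 / (2 * π) + a ^ 2) - x / √(2 * π)) / a := by rw [hexp, one_mul, hsqrt]

end MillsBound

theorem komatsu_pollak_general {a α : ℝ} (ha : 2 / π ≤ a) (hα : 0 ≤ α) :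
    2 * rexp (α ^ 2 / 2) * stdNormalCDF (-α) ≤
      (√(α ^ 2 / (2 * π) + a ^ 2) - α / √(2 * π)) / a := by
  rw [← two_mul_exp_mul_gaussianPDFReal_mul_millsBound]
  gcongr
  exact stdNormalCDF_neg_le ha hα

theorem komatsu_pollak (α : ℝ) (hα : 0 < α) :
    2 * Real.exp (α ^ 2 / 2) * stdNormalCDF (-α) ≤
      Real.sqrt (α ^ 2 / (2 * Real.pi) + 1) - α / Real.sqrt (2 * Real.pi) := by
  simpa only [one_pow, div_one] using
    komatsu_pollak_general ((div_le_one pi_pos).2 two_le_pi) hα.le
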